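/- Let 𝒴 be a Polish space, r ∈ [1,∞), and let F : 𝒫_r(𝒴) → ℝ ∪ {+∞} be convex, upper semicontinuous (with respect to 𝒲_r), and bounded above by a multiple of p ↦ 𝒲_r(p,p₀)^r for some fixed p₀ ∈ 𝒫_r(𝒴). Then F(I(Q)) ≤ ∫ F(q) Q(dq) for every Q ∈ 𝒫_r(𝒫_r(𝒴)). -/

import Mathlib

open MeasureTheory Set Filter
open scoped ENNReal NNReal Topology RealInnerProductSpace

noncomputable section

namespace WOT

/-- The set of couplings of `μ` and `ν`. -/
def Couplings {X Y : Type*} [MeasurableSpace X] [MeasurableSpace Y]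
    (μ : Measure X) (ν : Measure Y) : Set (Measure (X × Y)) :=
  {π | π.map Prod.fst = μ ∧ π.map Prod.snd = ν}

/-- `K` is a disintegration of `π` with respect to its first marginal `μ`. -/
def IsDisint {X Y : Type*} [MeasurableSpace X] [MeasurableSpace Y]
    (π : Measure (X × Y)) (μ : Measure X) (K : X → Measure Y) : Prop :=
  Measurable K ∧ (∀ x, IsProbabilityMeasure (K x)) ∧
    ∀ s : Set (X × Y), MeasurableSet s → π s = ∫⁻ x, K x (Prod.mk x ⁻¹' s) ∂μ

/-- The intensity `I(Q)` of a measure on measures. -/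
def intensity {Y : Type*} [MeasurableSpace Y] (Q : Measure (Measure Y)) : Measure Y :=
  Q.join

/-- The intensity map `Î`. -/
def intensityHat {X Y : Type*} [MeasurableSpace X] [MeasurableSpace Y]
    (P : Measure (X × Measure Y)) : Measure (X × Y) :=
  P.bind fun xp => (Measure.dirac xp.1).prod xp.2

/-- `Λ(μ,ν)`, the set of probability measures on `X × 𝒫(Y)` whose intensity is a coupling. -/
def Lambda {X Y : Type*} [MeasurableSpace X] [MeasurableSpace Y]
    (μ : Measure X) (ν : Measure Y) : Set (Measure (X × Measure Y)) :=
  {P | IsProbabilityMeasure P ∧ (∀ᵐ xp ∂P, IsProbabilityMeasure xp.2) ∧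
    intensityHat P ∈ Couplings μ ν}

/-- Finite `r`-th moment. -/
def FinMom {X : Type*} [MeasurableSpace X] [PseudoMetricSpace X]
    (r : ℝ) (x₀ : X) (μ : Measure X) : Prop :=
  ∫⁻ x, ENNReal.ofReal (dist x x₀ ^ r) ∂μ < ⊤

/-- The growth class `Φ_r`. -/
def PhiR {X : Type*} [PseudoMetricSpace X] (r : ℝ) (x₀ : X) : Set (X → ℝ) :=
  {φ | Continuous φ ∧ ∃ K : ℝ, ∀ x, |φ x| ≤ K * (1 + dist x x₀ ^ r)}

/-- The `r`-Wasserstein distance (valued in `ℝ≥0∞`). -/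
def Wr {Y : Type*} [MeasurableSpace Y] [PseudoMetricSpace Y]
    (r : ℝ) (p q : Measure Y) : ℝ≥0∞ :=
  ⨅ π ∈ Couplings p q, (∫⁻ z : Y × Y, ENNReal.ofReal (dist z.1 z.2 ^ r) ∂π) ^ (1 / r)

/-- `𝒫_r(Y)`: probability measures with finite `r`-th moment. -/
def Pr {Y : Type*} [MeasurableSpace Y] [PseudoMetricSpace Y] (r : ℝ) (y₀ : Y) :
    Set (Measure Y) :=
  {p | IsProbabilityMeasure p ∧ FinMom r y₀ p}

/-- `𝒫_r(𝒫_r(Y))`: probability measures on `𝒫_r(Y)` with finite `r`-th moment w.r.t. `𝒲_r`. -/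
def PrP {Y : Type*} [MeasurableSpace Y] [PseudoMetricSpace Y] (r : ℝ) (y₀ : Y) :
    Set (Measure (Measure Y)) :=
  {Q | IsProbabilityMeasure Q ∧ (∀ᵐ p ∂Q, p ∈ Pr r y₀) ∧
    ∫⁻ p, Wr r p (Measure.dirac y₀) ^ r ∂Q < ⊤}

/-- The positive part of an extended real, valued in `ℝ≥0∞`. -/
def epos (e : EReal) : ℝ≥0∞ := if e = ⊤ then ⊤ else ENNReal.ofReal e.toReal

/-- Extended-real integral: positive part minus negative part (with value `⊥` when
both parts are infinite, i.e. when the integral is not well-defined). -/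
def eInt {X : Type*} [MeasurableSpace X] (f : X → EReal) (μ : Measure X) : EReal :=
  ((∫⁻ x, epos (f x) ∂μ : ℝ≥0∞) : EReal) - ((∫⁻ x, epos (-(f x)) ∂μ : ℝ≥0∞) : EReal)

/-- Extended-real integral with the opposite (`⊤`) convention for ill-defined integrals. -/
def eIntU {X : Type*} [MeasurableSpace X] (f : X → EReal) (μ : Measure X) : EReal :=
  -eInt (fun x => -(f x)) μ

/-- The extended-real integral is well-defined. -/
def eIntWellDef {X : Type*} [MeasurableSpace X] (f : X → EReal) (μ : Measure X) : Prop :=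
  (∫⁻ x, epos (f x) ∂μ ≠ ⊤) ∨ (∫⁻ x, epos (-(f x)) ∂μ ≠ ⊤)

/-- Convergence in the `r`-Wasserstein distance. -/
def WrTendsto {Y : Type*} [MeasurableSpace Y] [PseudoMetricSpace Y]
    (r : ℝ) (ps : ℕ → Measure Y) (p : Measure Y) : Prop :=
  Tendsto (fun n => Wr r (ps n) p) atTop (nhds 0)

/-- (Sequential) lower semicontinuity on `𝒫_r(Y)` w.r.t. `𝒲_r`. -/
def LscWr1 {Y : Type*} [MeasurableSpace Y] [PseudoMetricSpace Y]
    (r : ℝ) (y₀ : Y) (G : Measure Y → EReal) : Prop :=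
  ∀ (p : Measure Y) (ps : ℕ → Measure Y), p ∈ Pr r y₀ → (∀ n, ps n ∈ Pr r y₀) →
    WrTendsto r ps p → G p ≤ liminf (fun n => G (ps n)) atTop

/-- (Sequential) upper semicontinuity on `𝒫_r(Y)` w.r.t. `𝒲_r`. -/
def UscWr1 {Y : Type*} [MeasurableSpace Y] [PseudoMetricSpace Y]
    (r : ℝ) (y₀ : Y) (G : Measure Y → EReal) : Prop :=
  ∀ (p : Measure Y) (ps : ℕ → Measure Y), p ∈ Pr r y₀ → (∀ n, ps n ∈ Pr r y₀) →
    WrTendsto r ps p → limsup (fun n => G (ps n)) atTop ≤ G p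

/-- (Sequential) lower semicontinuity on `X × 𝒫_r(Y)` w.r.t. `d_X × 𝒲_r`. -/
def LscWr {X Y : Type*} [TopologicalSpace X] [MeasurableSpace Y] [PseudoMetricSpace Y]
    (r : ℝ) (y₀ : Y) (C : X × Measure Y → EReal) : Prop :=
  ∀ (x : X) (xs : ℕ → X) (p : Measure Y) (ps : ℕ → Measure Y),
    p ∈ Pr r y₀ → (∀ n, ps n ∈ Pr r y₀) → Tendsto xs atTop (nhds x) → WrTendsto r ps p →
    C (x, p) ≤ liminf (fun n => C (xs n, ps n)) atTop

/-- (Sequential) continuity of a real-valued cost on `X × 𝒫_r(Y)` w.r.t. `d_X × 𝒲_r`. -/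
def ContWr {X Y : Type*} [TopologicalSpace X] [MeasurableSpace Y] [PseudoMetricSpace Y]
    (r : ℝ) (y₀ : Y) (C : X × Measure Y → ℝ) : Prop :=
  ∀ (x : X) (xs : ℕ → X) (p : Measure Y) (ps : ℕ → Measure Y),
    p ∈ Pr r y₀ → (∀ n, ps n ∈ Pr r y₀) → Tendsto xs atTop (nhds x) → WrTendsto r ps p →
    Tendsto (fun n => C (xs n, ps n)) atTop (nhds (C (x, p)))

/-- Convexity of an extended-real-valued function on a set of measures. -/
def EConvexOn {Y : Type*} [MeasurableSpace Y] (S : Set (Measure Y)) (G : Measure Y → EReal) :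
    Prop :=
  ∀ p ∈ S, ∀ q ∈ S, ∀ t : ℝ≥0, t ≤ 1 →
    G ((t : ℝ≥0∞) • p + ((1 - t : ℝ≥0) : ℝ≥0∞) • q)
      ≤ ((t : ℝ) : EReal) * G p + (((1 - t : ℝ≥0) : ℝ) : EReal) * G q

/-- The lower semicontinuous convex envelope (on `𝒫_r(Y)` w.r.t. `𝒲_r`). -/
def cvxEnvWr {Y : Type*} [MeasurableSpace Y] [PseudoMetricSpace Y]
    (r : ℝ) (y₀ : Y) (f : Measure Y → EReal) : Measure Y → EReal :=
  fun p => ⨆ G ∈ {G : Measure Y → EReal |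
    LscWr1 r y₀ G ∧ EConvexOn (Pr r y₀) G ∧ ∀ q ∈ Pr r y₀, G q ≤ f q}, G p

/-- The cost `C̃(x,p) = inf {∫ C(x,q) Q(dq) : Q ∈ 𝒫_r(𝒫_r(Y)), I(Q) = p}`. -/
def tildeC {X Y : Type*} [MeasurableSpace X] [MeasurableSpace Y] [PseudoMetricSpace Y]
    (r : ℝ) (y₀ : Y) (C : X × Measure Y → EReal) : X × Measure Y → EReal :=
  fun xp => ⨅ Q ∈ {Q | Q ∈ PrP r y₀ ∧ intensity Q = xp.2}, eInt (fun q => C (xp.1, q)) Q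

/-- The barycenter of a measure on a normed space. -/
def bary {E : Type*} [NormedAddCommGroup E] [NormedSpace ℝ E] [MeasurableSpace E]
    (p : Measure E) : E :=
  ∫ y, y ∂p

/-- Convex order of measures. -/
def ConvexOrder {E : Type*} [NormedAddCommGroup E] [NormedSpace ℝ E] [MeasurableSpace E]
    (ν' ν : Measure E) : Prop :=
  ∀ θ : E → ℝ, ConvexOn ℝ Set.univ θ →
    eInt (fun y => ((θ y : ℝ) : EReal)) ν' ≤ eInt (fun y => ((θ y : ℝ) : EReal)) ν

/-- The inf-convolution `R_C ψ`. -/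
def RC {X Y : Type*} [MeasurableSpace Y] [PseudoMetricSpace Y]
    (r : ℝ) (y₀ : Y) (C : X × Measure Y → EReal) (ψ : Y → ℝ) : X → EReal :=
  fun x => ⨅ p ∈ Pr r y₀, (((-∫ y, ψ y ∂p : ℝ) : EReal) + C (x, p))

/-- `κ` is a regular conditional distribution of `Yv` given the sub-σ-algebra `m1`. -/
def IsRCD {Ω Y : Type*} [MeasurableSpace Y] (m1 : MeasurableSpace Ω)
    (mΩ : MeasurableSpace Ω) (P : @Measure Ω mΩ) (Yv : Ω → Y) (κ : Ω → Measure Y) : Prop :=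
  (∀ ω, IsProbabilityMeasure (κ ω)) ∧ Measurable[m1] κ ∧
    ∀ A : Set Y, MeasurableSet A → ∀ B : Set Ω, MeasurableSet[m1] B →
      P (B ∩ Yv ⁻¹' A) = ∫⁻ ω in B, κ ω A ∂P

end WOT

open WOT

/-
A nested sequence of finite partitions of the space of measures, on which more and more of
countably many functionals `q ↦ ∫ g dq` are nearly constant, turns `Q` into finitely many cell
averages. For `Q`-almost every `q` the average over the cell of `q` converges to `q` in `𝒲_r`, and
so do the `r`-th moments. With `G` an affine function of the `r`-th moment dominating `F`, the
function `G - F` is concave, nonnegative and lower semicontinuous: finite Jensen at each level,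
followed by Fatou's lemma, gives `∫ (G - F) dQ ≤ (G - F)(I(Q))`, and `∫ G dQ = G(I(Q))` because
`G` is affine. As `F` need not be measurable, the pointwise limit inferior of the cell values is
used in place of `G - F`, which yields an integrable minorant of `F` rather than `∫ F dQ` itself.
-/

namespace WOT

open ProbabilityTheory

section Couplings

variable {X Y ι : Type*} [MeasurableSpace X] [MeasurableSpace Y]

lemma add_mem_couplings {μ μ' : Measure X} {ν ν' : Measure Y} {π π' : Measure (X × Y)}
    (h : π ∈ Couplings μ ν) (h' : π' ∈ Couplings μ' ν') :
    π + π' ∈ Couplings (μ + μ') (ν + ν') :=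
  ⟨by rw [Measure.map_add _ _ measurable_fst, h.1, h'.1],
    by rw [Measure.map_add _ _ measurable_snd, h.2, h'.2]⟩

lemma sum_mem_couplings (s : Finset ι) {μ : ι → Measure X} {ν : ι → Measure Y}
    {π : ι → Measure (X × Y)} (h : ∀ i ∈ s, π i ∈ Couplings (μ i) (ν i)) :
    ∑ i ∈ s, π i ∈ Couplings (∑ i ∈ s, μ i) (∑ i ∈ s, ν i) := by
  classical
  induction s using Finset.induction_on with
  | empty => simp [Couplings]
  | insert a s ha ih =>
    simp only [Finset.sum_insert ha]
    exact add_mem_couplings (h a (by simp)) (ih fun i hi => h i (by simp [hi]))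

lemma smul_prod_mem_couplings (a : ℝ≥0∞) (μ : Measure X) (ν : Measure Y) [SFinite ν] :
    a • μ.prod ν ∈ Couplings ((a * ν univ) • μ) ((a * μ univ) • ν) :=
  ⟨by rw [Measure.map_smul, Measure.map_fst_prod, smul_smul],
    by rw [Measure.map_smul, Measure.map_snd_prod, smul_smul]⟩

lemma inv_smul_prod_mem_couplings {μ : Measure X} {ν : Measure Y} [IsFiniteMeasure μ]
    [IsFiniteMeasure ν] (h : μ univ = ν univ) : (μ univ)⁻¹ • μ.prod ν ∈ Couplings μ ν := by
  rcases eq_or_ne μ 0 with rfl | hμ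
  · have hν : ν = 0 := Measure.measure_univ_eq_zero.1 (by simp [← h])
    simp [hν, Couplings]
  · have hinv : (μ univ)⁻¹ * μ univ = 1 :=
      ENNReal.inv_mul_cancel (Measure.measure_univ_ne_zero.2 hμ) (measure_ne_top _ _)
    simpa only [← h, hinv, one_smul] using smul_prod_mem_couplings (μ univ)⁻¹ μ ν

lemma lintegral_prod_le_of_ae_le_add {μ : Measure X} {ν : Measure Y} [IsFiniteMeasure ν]
    {k : X × Y → ℝ≥0∞} {f : X → ℝ≥0∞} {g : Y → ℝ≥0∞}
    (h : ∀ᵐ x ∂μ, ∀ᵐ y ∂ν, k (x, y) ≤ f x + g y) :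
    ∫⁻ z, k z ∂μ.prod ν ≤ ν univ * ∫⁻ x, f x ∂μ + μ univ * ∫⁻ y, g y ∂ν :=
  calc ∫⁻ z, k z ∂μ.prod ν ≤ ∫⁻ x, ∫⁻ y, k (x, y) ∂ν ∂μ := lintegral_prod_le k
    _ ≤ ∫⁻ x, ∫⁻ y, (f x + g y) ∂ν ∂μ :=
        lintegral_mono_ae (h.mono fun x hx => lintegral_mono_ae hx)
    _ = ν univ * ∫⁻ x, f x ∂μ + μ univ * ∫⁻ y, g y ∂ν := by
        simp only [lintegral_add_left measurable_const, lintegral_const,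
          lintegral_add_right _ measurable_const, lintegral_mul_const' _ _ (measure_ne_top ν _)]
        ring

lemma inv_smul_lintegral_prod_le {μ : Measure X} {ν : Measure Y} [IsFiniteMeasure ν]
    (hmass : μ univ = ν univ) {k : X × Y → ℝ≥0∞} {f : X → ℝ≥0∞} {g : Y → ℝ≥0∞}
    (h : ∀ x y, k (x, y) ≤ f x + g y) :
    ∫⁻ z, k z ∂((μ univ)⁻¹ • μ.prod ν) ≤ ∫⁻ x, f x ∂μ + ∫⁻ y, g y ∂ν := by
  rw [lintegral_smul_measure, smul_eq_mul]
  calc (μ univ)⁻¹ * ∫⁻ z, k z ∂μ.prod ν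
      ≤ (μ univ)⁻¹ * (μ univ * (∫⁻ x, f x ∂μ + ∫⁻ y, g y ∂ν)) := by
        gcongr
        simpa only [← hmass, ← mul_add] using
          lintegral_prod_le_of_ae_le_add (ae_of_all μ fun x => ae_of_all ν (h x))
    _ ≤ ∫⁻ x, f x ∂μ + ∫⁻ y, g y ∂ν := by
        rw [← mul_assoc]
        exact mul_le_of_le_one_left' (ENNReal.inv_mul_le_one _)

end Couplings

lemma ofReal_dist_rpow_le {Y : Type*} [PseudoMetricSpace Y] {r : ℝ} (hr : 0 ≤ r) (y₀ x y : Y) :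
    ENNReal.ofReal (dist x y ^ r) ≤
      2 ^ r * ENNReal.ofReal (dist x y₀ ^ r) + 2 ^ r * ENNReal.ofReal (dist y y₀ ^ r) := by
  simp only [← ENNReal.ofReal_rpow_of_nonneg dist_nonneg hr, ← edist_dist]
  rw [← mul_add]
  exact (ENNReal.rpow_le_rpow (edist_triangle_right x y y₀) hr).trans
    (ENNReal.add_rpow_le_two_rpow_mul_rpow_add_rpow _ _ hr)

section Moments

variable {Y : Type*} [MeasurableSpace Y] [PseudoMetricSpace Y] {r : ℝ} {p q : Measure Y}

/-- The `r`-th moment `∫ d(y, y₀)^r p(dy)`, the quantity whose finiteness is `FinMom`. -/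
def distMoment (r : ℝ) (y₀ : Y) (p : Measure Y) : ℝ≥0∞ :=
  ∫⁻ y, ENNReal.ofReal (dist y y₀ ^ r) ∂p

lemma Wr_rpow_le_lintegral (hr : 0 < r) {π : Measure (Y × Y)} (hπ : π ∈ Couplings p q) :
    Wr r p q ^ r ≤ ∫⁻ z, ENNReal.ofReal (dist z.1 z.2 ^ r) ∂π := by
  rw [← ENNReal.le_rpow_inv_iff hr, ← one_div]
  exact iInf₂_le π hπ

lemma distMoment_add (y₀ : Y) : distMoment r y₀ (p + q) = distMoment r y₀ p + distMoment r y₀ q :=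
  lintegral_add_measure _ _ _

lemma distMoment_smul (a : ℝ≥0∞) (y₀ : Y) : distMoment r y₀ (a • p) = a * distMoment r y₀ p :=
  lintegral_smul_measure _ _

lemma distMoment_mono (y₀ : Y) (h : p ≤ q) : distMoment r y₀ p ≤ distMoment r y₀ q :=
  lintegral_mono' h le_rfl

lemma distMoment_le_of_bounded_off (y₀ : Y) {T : Set Y} (hT : MeasurableSet T) {R : ℝ≥0∞}
    (hR : ∀ y, y ∉ T → ENNReal.ofReal (dist y y₀ ^ r) ≤ R) :
    distMoment r y₀ p ≤ R * p univ + distMoment r y₀ (p.restrict T) := by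
  rw [distMoment, ← lintegral_add_compl _ hT, add_comm]
  refine add_le_add_left ?_ _
  calc ∫⁻ y in Tᶜ, ENNReal.ofReal (dist y y₀ ^ r) ∂p ≤ ∫⁻ _ in Tᶜ, R ∂p :=
        setLIntegral_mono' hT.compl hR
    _ ≤ R * p univ := by
        rw [setLIntegral_const]
        gcongr
        exact subset_univ _

lemma inv_smul_prod_cost_le (hr : 0 ≤ r) (y₀ : Y) [IsFiniteMeasure q]
    (hmass : p univ = q univ) :
    ∫⁻ z, ENNReal.ofReal (dist z.1 z.2 ^ r) ∂((p univ)⁻¹ • p.prod q) ≤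
      2 ^ r * (distMoment r y₀ p + distMoment r y₀ q) := by
  have h2 : (2 : ℝ≥0∞) ^ r ≠ ⊤ := ENNReal.rpow_ne_top_of_nonneg hr ENNReal.ofNat_ne_top
  simpa only [distMoment, lintegral_const_mul' _ _ h2, ← mul_add] using
    inv_smul_lintegral_prod_le hmass (k := fun z => ENNReal.ofReal (dist z.1 z.2 ^ r))
      fun x y => ofReal_dist_rpow_le hr y₀ x y

lemma Wr_rpow_le_distMoment (hr : 0 < r) (y₀ : Y) [IsProbabilityMeasure p]
    [IsProbabilityMeasure q] :
    Wr r p q ^ r ≤ 2 ^ r * (distMoment r y₀ p + distMoment r y₀ q) := by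
  have hmass : p univ = q univ := by simp only [measure_univ]
  exact (Wr_rpow_le_lintegral hr (inv_smul_prod_mem_couplings hmass)).trans
    (inv_smul_prod_cost_le hr.le y₀ hmass)

lemma measurable_ofReal_dist_rpow [OpensMeasurableSpace Y] (r : ℝ) (y₀ : Y) :
    Measurable fun y => ENNReal.ofReal (dist y y₀ ^ r) := by
  fun_prop

lemma distMoment_le_Wr_dirac_rpow [OpensMeasurableSpace Y] (hr : 0 < r) (y₀ : Y) :
    distMoment r y₀ p ≤ Wr r p (Measure.dirac y₀) ^ r := by
  suffices distMoment r y₀ p ^ (1 / r) ≤ Wr r p (Measure.dirac y₀) by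
    rwa [← ENNReal.rpow_inv_le_iff hr, ← one_div]
  refine le_iInf₂ fun π hπ => ENNReal.rpow_le_rpow ?_ (by positivity)
  have hsnd : ∀ᵐ z ∂π, dist z.2 y₀ = 0 := by
    refine ae_of_ae_map measurable_snd.aemeasurable (p := fun y => dist y y₀ = 0) ?_
    rw [hπ.2, ae_dirac_iff (measurableSet_eq_fun (by fun_prop) measurable_const)]
    exact dist_self y₀
  rw [distMoment, ← hπ.1, lintegral_map (measurable_ofReal_dist_rpow r y₀) measurable_fst]
  refine lintegral_mono_ae (hsnd.mono fun z hz => ENNReal.ofReal_le_ofReal ?_)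
  refine Real.rpow_le_rpow dist_nonneg ?_ hr.le
  simpa only [hz, add_zero] using dist_triangle z.1 z.2 y₀

end Moments

section CellwiseCoupling

variable {Y κ : Type*} [MeasurableSpace Y] [Fintype κ]

/-- The part of `p` that can be matched with `q` inside the cells `{c = a}`: in each cell, the
normalised restriction of `p` with the mass that `p` and `q` share there. -/
def matched (c : Y → κ) (p q : Measure Y) : Measure Y :=
  ∑ a, min (p (c ⁻¹' {a})) (q (c ⁻¹' {a})) • p[|c ⁻¹' {a}]

/-- The part of `p` that is left over by `matched`. -/
def excess (c : Y → κ) (p q : Measure Y) : Measure Y :=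
  ∑ a, (p (c ⁻¹' {a}) - q (c ⁻¹' {a})) • p[|c ⁻¹' {a}]

/-- The coupling of `matched c p q` and `matched c q p` that is independent inside each cell. -/
def matchedCoupling (c : Y → κ) (p q : Measure Y) : Measure (Y × Y) :=
  ∑ a, min (p (c ⁻¹' {a})) (q (c ⁻¹' {a})) • (p[|c ⁻¹' {a}]).prod (q[|c ⁻¹' {a}])

variable {c : Y → κ} {p q : Measure Y} [IsFiniteMeasure p]

lemma mul_cond_univ {s : Set Y} {b : ℝ≥0∞} (hb : b ≤ p s) : b * p[|s] univ = b := by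
  rcases eq_or_ne (p s) 0 with hs | hs
  · simp [le_zero_iff.1 (hs ▸ hb)]
  · have := cond_isProbabilityMeasure hs
    rw [measure_univ, mul_one]

lemma matched_univ : matched c p q univ = ∑ a, min (p (c ⁻¹' {a})) (q (c ⁻¹' {a})) := by
  simp only [matched, Measure.finsetSum_apply, Measure.smul_apply, smul_eq_mul,
    mul_cond_univ (min_le_left _ _)]

lemma excess_univ : excess c p q univ = ∑ a, (p (c ⁻¹' {a}) - q (c ⁻¹' {a})) := by
  simp only [excess, Measure.finsetSum_apply, Measure.smul_apply, smul_eq_mul,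
    mul_cond_univ tsub_le_self]

lemma matchedCoupling_mem_couplings [IsFiniteMeasure q] :
    matchedCoupling c p q ∈ Couplings (matched c p q) (matched c q p) := by
  refine sum_mem_couplings _ fun a _ => ?_
  have h := smul_prod_mem_couplings (min (p (c ⁻¹' {a})) (q (c ⁻¹' {a})))
    (p[|c ⁻¹' {a}]) (q[|c ⁻¹' {a}])
  rw [mul_cond_univ (min_le_left _ _), mul_cond_univ (min_le_right _ _)] at h
  rwa [min_comm (q _) (p _)]

variable [MeasurableSpace κ] [DiscreteMeasurableSpace κ]

lemma matched_add_excess (hc : Measurable c) (p q : Measure Y) [IsFiniteMeasure p] :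
    matched c p q + excess c p q = p := by
  conv_rhs => rw [← sum_meas_smul_cond_fiber hc p]
  simp only [matched, excess, ← Finset.sum_add_distrib, ← add_smul,
    add_comm (min _ _), tsub_add_min]

lemma matched_le (hc : Measurable c) : matched c p q ≤ p :=
  (Measure.le_add_right le_rfl).trans_eq (matched_add_excess hc p q)

lemma excess_le (hc : Measurable c) : excess c p q ≤ p :=
  (Measure.le_add_left le_rfl).trans_eq (matched_add_excess hc p q)

lemma excess_univ_comm (hc : Measurable c) [IsFiniteMeasure q] (hmass : p univ = q univ) :
    excess c p q univ = excess c q p univ := by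
  have hadd : ∀ p q : Measure Y, [IsFiniteMeasure p] →
      matched c p q univ + excess c p q univ = p univ := fun p q _ =>
    congrArg (fun μ : Measure Y => μ univ) (matched_add_excess hc p q)
  have hmatched : matched c p q univ = matched c q p univ := by
    simp only [matched_univ, min_comm]
  have hfin : matched c p q univ ≠ ⊤ :=
    ne_top_of_le_ne_top (measure_ne_top p univ) (hadd p q ▸ le_self_add)
  rw [← ENNReal.add_right_inj hfin, hadd p q, hmass, hmatched, hadd q p]

lemma lintegral_matchedCoupling_le (hc : Measurable c) [IsFiniteMeasure q]
    {k : Y × Y → ℝ≥0∞} {f g : Y → ℝ≥0∞} (h : ∀ x y, c x = c y → k (x, y) ≤ f x + g y) :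
    ∫⁻ z, k z ∂matchedCoupling c p q ≤ ∫⁻ x, f x ∂p + ∫⁻ y, g y ∂q := by
  have hcell : ∀ a, ∫⁻ z, k z ∂(p[|c ⁻¹' {a}]).prod (q[|c ⁻¹' {a}]) ≤
      ∫⁻ x, f x ∂p[|c ⁻¹' {a}] + ∫⁻ y, g y ∂q[|c ⁻¹' {a}] := fun a => by
    have hmem : ∀ μ : Measure Y, ∀ᵐ x ∂μ[|c ⁻¹' {a}], c x = a := fun μ =>
      ae_cond_mem (hc (measurableSet_singleton a))
    have hk : ∀ᵐ x ∂p[|c ⁻¹' {a}], ∀ᵐ y ∂q[|c ⁻¹' {a}], k (x, y) ≤ f x + g y := by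
      filter_upwards [hmem p] with x hx
      filter_upwards [hmem q] with y hy using h x y (hx.trans hy.symm)
    exact (lintegral_prod_le_of_ae_le_add hk).trans
      (add_le_add (mul_le_of_le_one_left' prob_le_one) (mul_le_of_le_one_left' prob_le_one))
  calc ∫⁻ z, k z ∂matchedCoupling c p q
      ≤ ∑ a, min (p (c ⁻¹' {a})) (q (c ⁻¹' {a})) *
          (∫⁻ x, f x ∂p[|c ⁻¹' {a}] + ∫⁻ y, g y ∂q[|c ⁻¹' {a}]) := by
        simp only [matchedCoupling, lintegral_finsetSum_measure, lintegral_smul_measure,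
          smul_eq_mul]
        gcongr with a
        exact hcell a
    _ = ∫⁻ x, f x ∂matched c p q + ∫⁻ y, g y ∂matched c q p := by
        simp only [matched, lintegral_finsetSum_measure, lintegral_smul_measure, smul_eq_mul,
          mul_add, Finset.sum_add_distrib, min_comm]
    _ ≤ ∫⁻ x, f x ∂p + ∫⁻ y, g y ∂q :=
        add_le_add (lintegral_mono' (matched_le hc) le_rfl)
          (lintegral_mono' (matched_le hc) le_rfl)

lemma Wr_rpow_le_of_cells [PseudoMetricSpace Y] {r : ℝ} (hr : 0 < r) (y₀ : Y)
    [IsProbabilityMeasure p] [IsProbabilityMeasure q] (hc : Measurable c) {f g : Y → ℝ≥0∞}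
    (h : ∀ x y, c x = c y → ENNReal.ofReal (dist x y ^ r) ≤ f x + g y) :
    Wr r p q ^ r ≤ ∫⁻ x, f x ∂p + ∫⁻ y, g y ∂q +
      2 ^ r * (distMoment r y₀ (excess c p q) + distMoment r y₀ (excess c q p)) := by
  have : IsFiniteMeasure (excess c p q) := isFiniteMeasure_of_le p (excess_le hc)
  have : IsFiniteMeasure (excess c q p) := isFiniteMeasure_of_le q (excess_le hc)
  have hmass : excess c p q univ = excess c q p univ :=
    excess_univ_comm hc (by simp only [measure_univ])
  have hπ := add_mem_couplings (matchedCoupling_mem_couplings (c := c) (p := p) (q := q))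
    (inv_smul_prod_mem_couplings hmass)
  rw [matched_add_excess hc p q, matched_add_excess hc q p] at hπ
  refine (Wr_rpow_le_lintegral hr hπ).trans ?_
  rw [lintegral_add_measure]
  exact add_le_add (lintegral_matchedCoupling_le hc h) (inv_smul_prod_cost_le hr.le y₀ hmass)

lemma distMoment_excess_le [PseudoMetricSpace Y] {r : ℝ} (y₀ : Y) (hc : Measurable c) (a : κ)
    {R : ℝ≥0∞} (hR : ∀ x, c x ≠ a → ENNReal.ofReal (dist x y₀ ^ r) ≤ R) :
    distMoment r y₀ (excess c p q) ≤ R * ∑ b, (p (c ⁻¹' {b}) - q (c ⁻¹' {b})) +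
      distMoment r y₀ (p.restrict (c ⁻¹' {a})) := by
  refine (distMoment_le_of_bounded_off y₀ (hc (measurableSet_singleton a)) hR).trans ?_
  rw [excess_univ]
  gcongr
  exact distMoment_mono y₀ (Measure.restrict_mono_measure (excess_le hc) _)

lemma Wr_rpow_le_of_bounded_cells [PseudoMetricSpace Y] [OpensMeasurableSpace Y] {r : ℝ}
    (hr : 0 < r) (y₀ : Y) [IsProbabilityMeasure p] [IsProbabilityMeasure q] (hc : Measurable c)
    (a : κ) {δ R : ℝ≥0∞}
    (hδ : ∀ x y, c x = c y → c x ≠ a → ENNReal.ofReal (dist x y ^ r) ≤ δ)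
    (hR : ∀ x, c x ≠ a → ENNReal.ofReal (dist x y₀ ^ r) ≤ R) :
    Wr r p q ^ r ≤ δ + 2 ^ r * (2 * distMoment r y₀ (p.restrict (c ⁻¹' {a})) +
      2 * distMoment r y₀ (q.restrict (c ⁻¹' {a})) +
      R * ∑ b, ((p (c ⁻¹' {b}) - q (c ⁻¹' {b})) + (q (c ⁻¹' {b}) - p (c ⁻¹' {b})))) := by
  have hT : MeasurableSet (c ⁻¹' {a}) := hc (measurableSet_singleton a)
  let d : Y → ℝ≥0∞ := (c ⁻¹' {a}).indicator fun y => ENNReal.ofReal (dist y y₀ ^ r)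
  have hd : Measurable d := (measurable_ofReal_dist_rpow r y₀).indicator hT
  have hint : ∀ μ : Measure Y, ∫⁻ y, 2 ^ r * d y ∂μ =
      2 ^ r * distMoment r y₀ (μ.restrict (c ⁻¹' {a})) := fun μ => by
    rw [lintegral_const_mul _ hd, lintegral_indicator hT, distMoment]
  have hcost : ∀ x y, c x = c y → ENNReal.ofReal (dist x y ^ r) ≤
      (δ + 2 ^ r * d x) + 2 ^ r * d y := fun x y hxy => by
    by_cases hx : c x = a
    · simp only [d, indicator_of_mem (show x ∈ c ⁻¹' {a} from hx),
        indicator_of_mem (show y ∈ c ⁻¹' {a} from hxy.symm.trans hx)]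
      rw [add_assoc]
      exact (ofReal_dist_rpow_le hr.le y₀ x y).trans le_add_self
    · exact (hδ x y hxy hx).trans (le_add_right le_self_add)
  calc Wr r p q ^ r
      ≤ (δ + 2 ^ r * distMoment r y₀ (p.restrict (c ⁻¹' {a})) +
          2 ^ r * distMoment r y₀ (q.restrict (c ⁻¹' {a}))) +
        2 ^ r * ((R * ∑ b, (p (c ⁻¹' {b}) - q (c ⁻¹' {b})) +
            distMoment r y₀ (p.restrict (c ⁻¹' {a}))) +
          (R * ∑ b, (q (c ⁻¹' {b}) - p (c ⁻¹' {b})) +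
            distMoment r y₀ (q.restrict (c ⁻¹' {a})))) := by
        refine (Wr_rpow_le_of_cells hr y₀ hc hcost).trans ?_
        rw [lintegral_add_left measurable_const, lintegral_const, measure_univ, mul_one, hint, hint]
        gcongr <;> exact distMoment_excess_le y₀ hc a hR
    _ = _ := by
        rw [Finset.sum_add_distrib]
        ring

end CellwiseCoupling

section TruncatedCells

variable {Y : Type*} {N : Y → ℕ}

/-- The quantizer `N` with all values from `m` on merged into the last cell `m`. -/
def truncatedCell (N : Y → ℕ) (m : ℕ) (y : Y) : Fin (m + 1) :=
  ⟨min (N y) m, by lia⟩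

lemma measurable_truncatedCell [MeasurableSpace Y] (hN : Measurable N) (m : ℕ) :
    Measurable (truncatedCell N m) :=
  (measurable_from_top (f := fun n : ℕ => (⟨min n m, by lia⟩ : Fin (m + 1)))).comp hN

lemma truncatedCell_ne_last {m : ℕ} {y : Y} :
    truncatedCell N m y ≠ Fin.last m ↔ N y < m := by
  simp only [truncatedCell, ne_eq, Fin.ext_iff, Fin.val_last]
  lia

lemma eq_of_truncatedCell_eq {m : ℕ} {x y : Y}
    (h : truncatedCell N m x = truncatedCell N m y) (hx : truncatedCell N m x ≠ Fin.last m) :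
    N x = N y := by
  rw [truncatedCell_ne_last] at hx
  simp only [truncatedCell, Fin.ext_iff] at h
  lia

lemma exists_bound_off_last [PseudoMetricSpace Y] {r : ℝ}
    (hN : ∀ n, Bornology.IsBounded (N ⁻¹' {n})) (hr : 0 ≤ r) (y₀ : Y) (m : ℕ) :
    ∃ R : ℝ≥0∞, R ≠ ⊤ ∧
      ∀ y, truncatedCell N m y ≠ Fin.last m → ENNReal.ofReal (dist y y₀ ^ r) ≤ R := by
  have hbdd : Bornology.IsBounded (⋃ n ∈ Finset.range m, N ⁻¹' {n}) :=
    (Bornology.isBounded_biUnion_finset _).2 fun n _ => hN n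
  obtain ⟨ρ, hρ⟩ := hbdd.subset_closedBall y₀
  refine ⟨ENNReal.ofReal (ρ ^ r), ENNReal.ofReal_ne_top, fun y hy => ?_⟩
  have hmem : y ∈ ⋃ n ∈ Finset.range m, N ⁻¹' {n} :=
    mem_biUnion (Finset.mem_range.2 (truncatedCell_ne_last.1 hy)) rfl
  exact ENNReal.ofReal_le_ofReal (Real.rpow_le_rpow dist_nonneg (hρ hmem) hr)

end TruncatedCells

section Quantization

variable {Y : Type*} [MeasurableSpace Y] [PseudoMetricSpace Y] {r : ℝ} {q : Measure Y}

lemma exists_measurable_quantizer [OpensMeasurableSpace Y] [TopologicalSpace.SeparableSpace Y]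
    {δ : ℝ} (hδ : 0 < δ) :
    ∃ N : Y → ℕ, Measurable N ∧ (∀ n, Bornology.IsBounded (N ⁻¹' {n})) ∧
      ∀ x y, N x = N y → dist x y ≤ δ := by
  obtain ⟨A, hAm, hAb, hAδ, hAcover, hAdisj⟩ :=
    SeparableSpace.exists_measurable_partition_diam_le Y hδ
  choose N hN using fun y => mem_iUnion.1 (hAcover.symm ▸ mem_univ y)
  have hfibre : ∀ n, N ⁻¹' {n} = A n := fun n => by
    ext y
    refine ⟨fun h => h ▸ hN y, fun h => by_contra fun hne => ?_⟩
    exact disjoint_left.1 (hAdisj hne) (hN y) h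
  refine ⟨N, measurable_to_countable' fun n => hfibre n ▸ hAm n,
    fun n => hfibre n ▸ hAb n, fun x y hxy => ?_⟩
  exact (Metric.dist_le_diam_of_mem (hAb (N x)) (hN x) (hxy ▸ hN y)).trans (hAδ _)

lemma tendsto_distMoment_restrict_last [OpensMeasurableSpace Y] {N : Y → ℕ} (hN : Measurable N)
    {y₀ : Y} (hq : FinMom r y₀ q) :
    Tendsto (fun m => distMoment r y₀ (q.restrict (truncatedCell N m ⁻¹' {Fin.last m}))) atTop
      (𝓝 0) := by
  have hT : ∀ m, MeasurableSet (truncatedCell N m ⁻¹' {Fin.last m}) := fun m =>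
    measurable_truncatedCell hN m (measurableSet_singleton _)
  simp only [distMoment, ← lintegral_indicator (hT _)]
  rw [← lintegral_zero (α := Y) (μ := q)]
  refine tendsto_lintegral_of_dominated_convergence _
    (fun m => (measurable_ofReal_dist_rpow r y₀).indicator (hT m))
    (fun m => ae_of_all _ (indicator_le_self _ _)) hq.ne (ae_of_all _ fun y => ?_)
  refine tendsto_const_nhds.congr' ?_
  filter_upwards [eventually_gt_atTop (N y)] with m hm
  have hy : y ∉ truncatedCell N m ⁻¹' {Fin.last m} := truncatedCell_ne_last.2 hm
  exact (indicator_of_notMem hy _).symm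

lemma wrTendsto_of_limsup_rpow_le {ps : ℕ → Measure Y} (hr : 0 < r)
    (h : ∀ k : ℕ, limsup (fun n => Wr r (ps n) q ^ r) atTop ≤
      ENNReal.ofReal ((1 / ((k : ℝ) + 1)) ^ r)) : WrTendsto r ps q := by
  have hlim : Tendsto (fun k : ℕ => ENNReal.ofReal ((1 / ((k : ℝ) + 1)) ^ r)) atTop (𝓝 0) := by
    have h0 := tendsto_one_div_add_atTop_nhds_zero_nat.rpow_const (Or.inr hr.le) (p := r)
    rw [Real.zero_rpow hr.ne'] at h0
    simpa only [ENNReal.ofReal_zero] using ENNReal.tendsto_ofReal h0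
  have hrpow : Tendsto (fun n => Wr r (ps n) q ^ r) atTop (𝓝 0) :=
    tendsto_of_le_liminf_of_limsup_le bot_le (ge_of_tendsto' hlim h)
  simpa only [WrTendsto, ENNReal.rpow_rpow_inv hr.ne', ENNReal.zero_rpow_of_pos (inv_pos.2 hr)]
    using hrpow.ennrpow_const r⁻¹

end Quantization

section WassersteinConvergence

variable {Y : Type*} [MeasurableSpace Y] [PseudoMetricSpace Y] [OpensMeasurableSpace Y] {r : ℝ}
  {y₀ : Y} {q : Measure Y} {ps : ℕ → Measure Y}

lemma limsup_Wr_rpow_le_of_bounded_cells {κ : Type*} [Finite κ] [MeasurableSpace κ]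
    [DiscreteMeasurableSpace κ] (hr : 0 < r) (hq : q ∈ Pr r y₀)
    (hps : ∀ n, IsProbabilityMeasure (ps n)) {c : Y → κ} (hc : Measurable c) (a : κ)
    {δ R : ℝ≥0∞} (hRtop : R ≠ ⊤)
    (hδ : ∀ x y, c x = c y → c x ≠ a → ENNReal.ofReal (dist x y ^ r) ≤ δ)
    (hR : ∀ x, c x ≠ a → ENNReal.ofReal (dist x y₀ ^ r) ≤ R)
    (hmass : ∀ b, Tendsto (fun n => ps n (c ⁻¹' {b})) atTop (𝓝 (q (c ⁻¹' {b}))))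
    (hmom : Tendsto (fun n => distMoment r y₀ ((ps n).restrict (c ⁻¹' {a}))) atTop
      (𝓝 (distMoment r y₀ (q.restrict (c ⁻¹' {a}))))) :
    limsup (fun n => Wr r (ps n) q ^ r) atTop ≤
      δ + 2 ^ r * (4 * distMoment r y₀ (q.restrict (c ⁻¹' {a}))) := by
  have := Fintype.ofFinite κ
  have := hq.1
  have h2 : (2 : ℝ≥0∞) ^ r ≠ ⊤ := ENNReal.rpow_ne_top_of_nonneg hr.le ENNReal.ofNat_ne_top
  have hsum : Tendsto (fun n => R * ∑ b, ((ps n (c ⁻¹' {b}) - q (c ⁻¹' {b})) +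
      (q (c ⁻¹' {b}) - ps n (c ⁻¹' {b})))) atTop (𝓝 0) := by
    have hdiff : ∀ b, Tendsto (fun n => (ps n (c ⁻¹' {b}) - q (c ⁻¹' {b})) +
        (q (c ⁻¹' {b}) - ps n (c ⁻¹' {b}))) atTop (𝓝 0) := fun b => by
      have hfin := measure_ne_top q (c ⁻¹' {b})
      simpa only [tsub_self, add_zero] using
        (ENNReal.Tendsto.sub (hmass b) (tendsto_const_nhds (x := q (c ⁻¹' {b}))) (Or.inl hfin)).add
          (ENNReal.Tendsto.sub (tendsto_const_nhds (x := q (c ⁻¹' {b}))) (hmass b) (Or.inl hfin))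
    simpa only [Finset.sum_const_zero, mul_zero] using
      ENNReal.Tendsto.const_mul (tendsto_finsetSum _ fun b _ => hdiff b) (Or.inr hRtop)
  have hbound : Tendsto (fun n => δ + 2 ^ r *
      (2 * distMoment r y₀ ((ps n).restrict (c ⁻¹' {a})) +
        2 * distMoment r y₀ (q.restrict (c ⁻¹' {a})) +
        R * ∑ b, ((ps n (c ⁻¹' {b}) - q (c ⁻¹' {b})) + (q (c ⁻¹' {b}) - ps n (c ⁻¹' {b})))))
      atTop (𝓝 (δ + 2 ^ r * (2 * distMoment r y₀ (q.restrict (c ⁻¹' {a})) +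
        2 * distMoment r y₀ (q.restrict (c ⁻¹' {a})) + 0))) :=
    tendsto_const_nhds.add (ENNReal.Tendsto.const_mul
      (((ENNReal.Tendsto.const_mul hmom (Or.inr ENNReal.ofNat_ne_top)).add_const _).add hsum)
      (Or.inr h2))
  rw [add_zero, ← add_mul, two_add_two_eq_four] at hbound
  rw [← hbound.limsup_eq]
  exact limsup_le_limsup (Eventually.of_forall fun n =>
    have := hps n
    Wr_rpow_le_of_bounded_cells hr y₀ hc a hδ hR)

lemma limsup_Wr_rpow_le_of_quantizer (hr : 0 < r) (hq : q ∈ Pr r y₀)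
    (hps : ∀ n, IsProbabilityMeasure (ps n)) {N : Y → ℕ} (hN : Measurable N)
    (hbdd : ∀ n, Bornology.IsBounded (N ⁻¹' {n})) {δ : ℝ}
    (hδ : ∀ x y, N x = N y → dist x y ≤ δ)
    (hmass : ∀ m b, Tendsto (fun n => ps n (truncatedCell N m ⁻¹' {b})) atTop
      (𝓝 (q (truncatedCell N m ⁻¹' {b}))))
    (hmom : ∀ m, Tendsto
      (fun n => distMoment r y₀ ((ps n).restrict (truncatedCell N m ⁻¹' {Fin.last m}))) atTop
      (𝓝 (distMoment r y₀ (q.restrict (truncatedCell N m ⁻¹' {Fin.last m}))))) :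
    limsup (fun n => Wr r (ps n) q ^ r) atTop ≤ ENNReal.ofReal (δ ^ r) := by
  have h2 : (2 : ℝ≥0∞) ^ r ≠ ⊤ := ENNReal.rpow_ne_top_of_nonneg hr.le ENNReal.ofNat_ne_top
  have hlim : Tendsto (fun m => ENNReal.ofReal (δ ^ r) + 2 ^ r *
      (4 * distMoment r y₀ (q.restrict (truncatedCell N m ⁻¹' {Fin.last m})))) atTop
      (𝓝 (ENNReal.ofReal (δ ^ r))) := by
    simpa only [mul_zero, add_zero] using tendsto_const_nhds.add (ENNReal.Tendsto.const_mul
      (ENNReal.Tendsto.const_mul (tendsto_distMoment_restrict_last hN hq.2)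
        (Or.inr ENNReal.ofNat_ne_top)) (Or.inr h2))
  refine ge_of_tendsto' hlim fun m => ?_
  obtain ⟨R, hRtop, hR⟩ := exists_bound_off_last hbdd hr.le y₀ m
  refine limsup_Wr_rpow_le_of_bounded_cells hr hq hps (measurable_truncatedCell hN m) (Fin.last m)
    hRtop (fun x y hxy hx => ENNReal.ofReal_le_ofReal ?_) hR (hmass m) (hmom m)
  exact Real.rpow_le_rpow dist_nonneg (hδ x y (eq_of_truncatedCell_eq hxy hx)) hr.le

theorem exists_countable_Wr_convergence_determining [TopologicalSpace.SeparableSpace Y]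
    (hr : 0 < r) (y₀ : Y) :
    ∃ 𝒢 : Set (Y → ℝ≥0∞), 𝒢.Countable ∧ (∀ g ∈ 𝒢, Measurable g) ∧
      ∀ q ∈ Pr r y₀, ∀ ps : ℕ → Measure Y, (∀ n, IsProbabilityMeasure (ps n)) →
        (∀ g ∈ 𝒢, Tendsto (fun n => ∫⁻ y, g y ∂ps n) atTop (𝓝 (∫⁻ y, g y ∂q))) →
          WrTendsto r ps q := by
  choose N hN hbdd hdist using fun k : ℕ =>
    exists_measurable_quantizer (Y := Y) (Nat.one_div_pos_of_nat (α := ℝ) (n := k))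
  have hcell : ∀ k m b, MeasurableSet (truncatedCell (N k) m ⁻¹' {b}) := fun k m b =>
    measurable_truncatedCell (hN k) m (measurableSet_singleton b)
  let cellInd : (Σ km : ℕ × ℕ, Fin (km.2 + 1)) → Y → ℝ≥0∞ := fun i =>
    (truncatedCell (N i.1.1) i.1.2 ⁻¹' {i.2}).indicator 1
  let tailMom : ℕ × ℕ → Y → ℝ≥0∞ := fun km =>
    (truncatedCell (N km.1) km.2 ⁻¹' {Fin.last km.2}).indicator
      fun y => ENNReal.ofReal (dist y y₀ ^ r)
  refine ⟨range cellInd ∪ range tailMom, (countable_range _).union (countable_range _), ?_, ?_⟩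
  · rintro _ (⟨i, rfl⟩ | ⟨km, rfl⟩)
    · exact measurable_one.indicator (hcell _ _ _)
    · exact (measurable_ofReal_dist_rpow r y₀).indicator (hcell _ _ _)
  intro q hq ps hps hconv
  refine wrTendsto_of_limsup_rpow_le hr fun k =>
    limsup_Wr_rpow_le_of_quantizer hr hq hps (hN k) (hbdd k) (hdist k) (fun m b => ?_) fun m => ?_
  · simpa only [cellInd, lintegral_indicator_one (hcell k m b)] using
      hconv (cellInd ⟨(k, m), b⟩) (Or.inl (mem_range_self _))
  · simpa only [distMoment, tailMom, lintegral_indicator (hcell k m _)] using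
      hconv (tailMom (k, m)) (Or.inr (mem_range_self _))

end WassersteinConvergence

section ThresholdCode

variable {α : Type*} {φ : ℕ → α → ℝ≥0∞}

/-- The truth values of the first `n` inequalities `t j < φ i x`, where `t` is a dense sequence of
thresholds and the pairs `(i, j)` are enumerated by `Nat.unpair`. Its fibres are finer and finer
finite partitions of `α` on which each `φ i` is eventually almost constant. -/
def thresholdCode (φ : ℕ → α → ℝ≥0∞) (n : ℕ) (x : α) : Fin n → Prop :=
  fun k => TopologicalSpace.denseSeq ℝ≥0∞ (Nat.unpair k).2 < φ (Nat.unpair k).1 x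

lemma lt_iff_of_thresholdCode_eq {n i j : ℕ} {x y : α} (hn : Nat.pair i j < n)
    (h : thresholdCode φ n y = thresholdCode φ n x) :
    TopologicalSpace.denseSeq ℝ≥0∞ j < φ i y ↔ TopologicalSpace.denseSeq ℝ≥0∞ j < φ i x := by
  simpa only [thresholdCode, Nat.unpair_pair] using iff_of_eq (congrFun h ⟨Nat.pair i j, hn⟩)

variable [MeasurableSpace α]

lemma measurable_thresholdCode (hφ : ∀ i, Measurable (φ i)) (n : ℕ) :
    Measurable (thresholdCode φ n) :=
  measurable_pi_iff.2 fun _ =>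
    measurableSet_setOfPred.1 (measurableSet_lt measurable_const (hφ _))

lemma tendsto_lintegral_of_thresholdCode_eq {x : α} {μ : ℕ → Measure α}
    [∀ n, IsProbabilityMeasure (μ n)]
    (hμ : ∀ n, ∀ᵐ y ∂μ n, thresholdCode φ n y = thresholdCode φ n x) (i : ℕ) :
    Tendsto (fun n => ∫⁻ y, φ i y ∂μ n) atTop (𝓝 (φ i x)) := by
  have hdense := TopologicalSpace.denseRange_denseSeq ℝ≥0∞
  refine tendsto_order.2 ⟨fun a ha => ?_, fun b hb => ?_⟩
  · obtain ⟨_, ⟨j, rfl⟩, haj, hjx⟩ := hdense.exists_between ha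
    filter_upwards [eventually_gt_atTop (Nat.pair i j)] with n hn
    refine haj.trans_le ?_
    calc TopologicalSpace.denseSeq ℝ≥0∞ j = ∫⁻ _, TopologicalSpace.denseSeq ℝ≥0∞ j ∂μ n := by
          rw [lintegral_const, measure_univ, mul_one]
      _ ≤ ∫⁻ y, φ i y ∂μ n := lintegral_mono_ae <| (hμ n).mono fun y hy =>
          ((lt_iff_of_thresholdCode_eq hn hy).2 hjx).le
  · obtain ⟨_, ⟨j, rfl⟩, hxj, hjb⟩ := hdense.exists_between hb
    filter_upwards [eventually_gt_atTop (Nat.pair i j)] with n hn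
    refine lt_of_le_of_lt ?_ hjb
    calc ∫⁻ y, φ i y ∂μ n ≤ ∫⁻ _, TopologicalSpace.denseSeq ℝ≥0∞ j ∂μ n :=
          lintegral_mono_ae <| (hμ n).mono fun y hy =>
            le_of_not_gt fun h => hxj.not_gt ((lt_iff_of_thresholdCode_eq hn hy).1 h)
      _ = TopologicalSpace.denseSeq ℝ≥0∞ j := by
          rw [lintegral_const, measure_univ, mul_one]

end ThresholdCode

lemma ae_measure_fiber_ne_zero {α β : Type*} [MeasurableSpace α] [Countable β] (μ : Measure α)
    (c : α → β) : ∀ᵐ x ∂μ, μ (c ⁻¹' {c x}) ≠ 0 := by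
  have hnull : ∀ᵐ x ∂μ, ∀ b, μ (c ⁻¹' {b}) = 0 → x ∉ c ⁻¹' {b} :=
    ae_all_iff.2 fun b => by
      by_cases hb : μ (c ⁻¹' {b}) = 0
      · exact (measure_eq_zero_iff_ae_notMem.1 hb).mono fun _ hx _ => hx
      · exact ae_of_all _ fun _ h => absurd h hb
  exact hnull.mono fun x hx h0 => hx _ h0 rfl

section FiberIntensity

variable {Y β : Type*} [MeasurableSpace Y]

/-- The barycenter of `Q` conditioned on the cell `{c = a}` of the partition induced by `c`. -/
def fiberIntensity (Q : Measure (Measure Y)) (c : Measure Y → β) (a : β) : Measure Y :=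
  intensity Q[|c ⁻¹' {a}]

lemma intensity_eq_sum_fiberIntensity [Fintype β] [MeasurableSpace β] [DiscreteMeasurableSpace β]
    (Q : Measure (Measure Y)) [IsFiniteMeasure Q] {c : Measure Y → β} (hc : Measurable c) :
    intensity Q = ∑ a, Q (c ⁻¹' {a}) • fiberIntensity Q c a := by
  ext s hs
  simp only [intensity, fiberIntensity, Measure.join_apply hs, Measure.finsetSum_apply,
    Measure.smul_apply, smul_eq_mul]
  conv_lhs => rw [← sum_meas_smul_cond_fiber hc Q]
  simp only [lintegral_finsetSum_measure, lintegral_smul_measure, smul_eq_mul]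

lemma exists_tendsto_lintegral_fiberIntensity (Q : Measure (Measure Y)) [IsFiniteMeasure Q]
    {g : ℕ → Y → ℝ≥0∞} (hg : ∀ i, Measurable (g i)) :
    ∃ c : ∀ n, Measure Y → (Fin n → Prop), (∀ n, Measurable (c n)) ∧
      ∀ᵐ q ∂Q, (∀ n, Q (c n ⁻¹' {c n q}) ≠ 0) ∧
        ∀ i, Tendsto (fun n => ∫⁻ y, g i y ∂fiberIntensity Q (c n) (c n q)) atTop
          (𝓝 (∫⁻ y, g i y ∂q)) := by
  let c := thresholdCode fun i (q : Measure Y) => ∫⁻ y, g i y ∂q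
  have hc : ∀ n, Measurable (c n) :=
    measurable_thresholdCode fun i => Measure.measurable_lintegral (hg i)
  refine ⟨c, hc, ?_⟩
  filter_upwards [ae_all_iff.2 fun n => ae_measure_fiber_ne_zero Q (c n)] with q hq
  refine ⟨hq, fun i => ?_⟩
  have : ∀ n, IsProbabilityMeasure Q[|c n ⁻¹' {c n q}] := fun n => cond_isProbabilityMeasure (hq n)
  have hcell : ∀ n, ∀ᵐ p ∂Q[|c n ⁻¹' {c n q}], c n p = c n q := fun n =>
    ae_cond_mem (hc n (measurableSet_singleton _))
  simpa only [fiberIntensity, intensity, Measure.lintegral_join (hg i).aemeasurable] using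
    tendsto_lintegral_of_thresholdCode_eq hcell i

variable [PseudoMetricSpace Y] [OpensMeasurableSpace Y] {r : ℝ} {y₀ : Y} {Q : Measure (Measure Y)}

lemma measurable_distMoment : Measurable (distMoment (Y := Y) r y₀) :=
  Measure.measurable_lintegral (measurable_ofReal_dist_rpow r y₀)

lemma distMoment_intensity (Q : Measure (Measure Y)) :
    distMoment r y₀ (intensity Q) = ∫⁻ q, distMoment r y₀ q ∂Q :=
  Measure.lintegral_join (measurable_ofReal_dist_rpow r y₀).aemeasurable

lemma lintegral_distMoment_lt_top (hr : 0 < r) (hQ : Q ∈ PrP r y₀) :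
    ∫⁻ q, distMoment r y₀ q ∂Q < ⊤ :=
  (lintegral_mono fun _ => distMoment_le_Wr_dirac_rpow hr y₀).trans_lt hQ.2.2

lemma intensity_mem_Pr [IsProbabilityMeasure Q] (hQ : ∀ᵐ q ∂Q, q ∈ Pr r y₀)
    (hmom : ∫⁻ q, distMoment r y₀ q ∂Q < ⊤) : intensity Q ∈ Pr r y₀ := by
  refine ⟨⟨?_⟩, (distMoment_intensity Q).trans_lt hmom⟩
  have hmass : ∀ᵐ q ∂Q, q univ = 1 := hQ.mono fun q hq => hq.1.measure_univ
  rw [intensity, Measure.join_apply MeasurableSet.univ, lintegral_congr_ae hmass, lintegral_const,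
    measure_univ, mul_one]

lemma fiberIntensity_mem_Pr (hr : 0 < r) (hQ : Q ∈ PrP r y₀) {c : Measure Y → β} {a : β}
    (ha : Q (c ⁻¹' {a}) ≠ 0) : fiberIntensity Q c a ∈ Pr r y₀ := by
  have := hQ.1
  have := cond_isProbabilityMeasure ha
  refine intensity_mem_Pr (cond_absolutelyContinuous.ae_le hQ.2.1) ?_
  rw [ProbabilityTheory.cond, lintegral_smul_measure]
  exact ENNReal.mul_lt_top (ENNReal.inv_lt_top.2 (pos_iff_ne_zero.2 ha))
    ((setLIntegral_le_lintegral _ _).trans_lt (lintegral_distMoment_lt_top hr hQ))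

theorem exists_tendsto_fiberIntensity [TopologicalSpace.SeparableSpace Y] (hr : 0 < r)
    (hQ : Q ∈ PrP r y₀) :
    ∃ c : ∀ n, Measure Y → (Fin n → Prop), (∀ n, Measurable (c n)) ∧
      ∀ᵐ q ∂Q, (∀ n, fiberIntensity Q (c n) (c n q) ∈ Pr r y₀) ∧
        WrTendsto r (fun n => fiberIntensity Q (c n) (c n q)) q ∧
        Tendsto (fun n => distMoment r y₀ (fiberIntensity Q (c n) (c n q))) atTop
          (𝓝 (distMoment r y₀ q)) := by
  have := hQ.1
  obtain ⟨𝒢, h𝒢, hmeas, hdet⟩ := exists_countable_Wr_convergence_determining hr y₀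
  obtain ⟨g, hg⟩ := (h𝒢.insert fun y => ENNReal.ofReal (dist y y₀ ^ r)).exists_eq_range
    (insert_nonempty _ _)
  have hgm : ∀ i, Measurable (g i) := fun i => by
    rcases (hg ▸ mem_range_self i : g i ∈ insert _ 𝒢) with hi | hi
    · exact hi ▸ measurable_ofReal_dist_rpow r y₀
    · exact hmeas _ hi
  obtain ⟨c, hc, hcell⟩ := exists_tendsto_lintegral_fiberIntensity Q hgm
  refine ⟨c, hc, ?_⟩
  filter_upwards [hcell, hQ.2.1] with q ⟨hpos, hconv⟩ hq
  have hmem := fun n => fiberIntensity_mem_Pr hr hQ (hpos n)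
  have hconv' : ∀ f ∈ range g, Tendsto (fun n => ∫⁻ y, f y ∂fiberIntensity Q (c n) (c n q)) atTop
      (𝓝 (∫⁻ y, f y ∂q)) := forall_mem_range.2 hconv
  rw [← hg] at hconv'
  exact ⟨hmem, hdet q hq _ (fun n => (hmem n).1) fun f hf => hconv' f (mem_insert_of_mem _ hf),
    hconv' _ (mem_insert _ _)⟩

end FiberIntensity

section FiniteJensen

variable {𝕜 E ι : Type*} [Semifield 𝕜] [LinearOrder 𝕜] [IsStrictOrderedRing 𝕜] [AddCommMonoid E]
  [Module 𝕜 E] {s : Set E} {t : Finset ι} {w : ι → 𝕜} {p : ι → E}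

lemma sum_smul_mem_of_convex (hs : Convex 𝕜 s) (hw : ∀ i ∈ t, 0 ≤ w i) (hw1 : ∑ i ∈ t, w i = 1)
    (hp : ∀ i ∈ t, w i ≠ 0 → p i ∈ s) : ∑ i ∈ t, w i • p i ∈ s := by
  classical
  induction t using Finset.induction_on generalizing w with
  | empty => simp at hw1
  | insert a t ha ih =>
    simp only [Finset.forall_mem_insert, Finset.sum_insert ha] at hw hw1 hp ⊢
    by_cases hwa : w a = 0
    · rw [hwa, zero_add] at hw1
      rw [hwa, zero_smul, zero_add]
      exact ih hw.2 hw1 hp.2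
    rcases (Finset.sum_nonneg hw.2).eq_or_lt' with hzero | hpos
    · have hwt := (Finset.sum_eq_zero_iff_of_nonneg hw.2).1 hzero
      rw [hzero, add_zero] at hw1
      rw [Finset.sum_eq_zero fun i hi => by rw [hwt i hi, zero_smul], hw1, one_smul, add_zero]
      exact hp.1 hwa
    · set u := ∑ i ∈ t, w i
      have hmem : ∑ i ∈ t, (u⁻¹ * w i) • p i ∈ s :=
        ih (fun i hi => mul_nonneg (inv_nonneg.2 hpos.le) (hw.2 i hi))
          (by rw [← Finset.mul_sum, inv_mul_cancel₀ hpos.ne'])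
          fun i hi h => hp.2 i hi (right_ne_zero_of_mul h)
      have hsum : u • ∑ i ∈ t, (u⁻¹ * w i) • p i = ∑ i ∈ t, w i • p i := by
        simp only [mul_smul, ← Finset.smul_sum, smul_inv_smul₀ hpos.ne']
      exact hsum ▸ hs (hp.1 hwa) hmem hw.1 hpos.le hw1

lemma sum_smul_le_map_of_concaveOn {β : Type*} [AddCommMonoid β] [PartialOrder β]
    [IsOrderedAddMonoid β] [Module 𝕜 β] [PosSMulMono 𝕜 β] {f : E → β} (hf : ConcaveOn 𝕜 s f)
    (hw : ∀ i ∈ t, 0 ≤ w i) (hw1 : ∑ i ∈ t, w i = 1) (hp : ∀ i ∈ t, w i ≠ 0 → p i ∈ s) :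
    ∑ i ∈ t, w i • f (p i) ≤ f (∑ i ∈ t, w i • p i) := by
  simpa only [Prod.smul_mk, Prod.fst_sum, Prod.snd_sum] using
    (sum_smul_mem_of_convex hf.convex_hypograph hw hw1 (p := fun i => (p i, f (p i)))
      fun i hi h => ⟨hp i hi h, le_rfl⟩).2

end FiniteJensen

section FiberIntensityJensen

variable {α Y β : Type*} [MeasurableSpace α] [MeasurableSpace Y] [MeasurableSpace β]
  [DiscreteMeasurableSpace β]

lemma lintegral_comp_eq_sum_fiber [Fintype β] (μ : Measure α) {c : α → β} (hc : Measurable c)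
    (g : β → ℝ≥0∞) :
    ∫⁻ x, g (c x) ∂μ = ∑ a, μ (c ⁻¹' {a}) * g a := by
  simp only [← lintegral_map (measurable_of_finite g) hc, lintegral_fintype,
    Measure.map_apply hc (measurableSet_singleton _), mul_comm]

lemma lintegral_ofReal_fiberIntensity_le [Finite β] {S : Set (Measure Y)} {φ : Measure Y → ℝ}
    (hφ : ConcaveOn ℝ≥0 S φ) (hφ0 : ∀ p ∈ S, 0 ≤ φ p) {Q : Measure (Measure Y)}
    [IsProbabilityMeasure Q] {c : Measure Y → β} (hc : Measurable c)
    (hmem : ∀ a, Q (c ⁻¹' {a}) ≠ 0 → fiberIntensity Q c a ∈ S) :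
    ∫⁻ q, ENNReal.ofReal (φ (fiberIntensity Q c (c q))) ∂Q ≤
      ENNReal.ofReal (φ (intensity Q)) := by
  have := Fintype.ofFinite β
  let w : β → ℝ≥0 := fun a => (Q (c ⁻¹' {a})).toNNReal
  have hw : ∀ a, Q (c ⁻¹' {a}) = w a := fun a => (ENNReal.coe_toNNReal (measure_ne_top _ _)).symm
  have hwmem : ∀ a ∈ Finset.univ, w a ≠ 0 → fiberIntensity Q c a ∈ S := fun a _ ha =>
    hmem a (by rw [hw]; exact_mod_cast ha)
  have hw1 : ∑ a, w a = 1 := by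
    have hone := lintegral_comp_eq_sum_fiber Q hc 1
    simp only [Pi.one_apply, lintegral_one, measure_univ, mul_one, hw] at hone
    exact_mod_cast hone.symm
  have hterm : ∀ a ∈ Finset.univ, 0 ≤ w a • φ (fiberIntensity Q c a) := fun a ha => by
    by_cases h0 : w a = 0
    · rw [h0, zero_smul]
    · exact smul_nonneg (zero_le (a := w a)) (hφ0 _ (hwmem a ha h0))
  calc ∫⁻ q, ENNReal.ofReal (φ (fiberIntensity Q c (c q))) ∂Q
      = ∑ a, w a * ENNReal.ofReal (φ (fiberIntensity Q c a)) := by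
        simp only [lintegral_comp_eq_sum_fiber Q hc fun a =>
          ENNReal.ofReal (φ (fiberIntensity Q c a)), hw]
    _ = ENNReal.ofReal (∑ a, w a • φ (fiberIntensity Q c a)) := by
        rw [ENNReal.ofReal_sum_of_nonneg hterm]
        simp only [NNReal.smul_def, smul_eq_mul, ENNReal.ofReal_mul (NNReal.coe_nonneg _),
          ENNReal.ofReal_coe_nnreal]
    _ ≤ ENNReal.ofReal (φ (∑ a, w a • fiberIntensity Q c a)) := ENNReal.ofReal_le_ofReal
        (sum_smul_le_map_of_concaveOn hφ (fun _ _ => zero_le) hw1 hwmem)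
    _ = ENNReal.ofReal (φ (intensity Q)) := by
        simp only [intensity_eq_sum_fiberIntensity Q hc, hw, ENNReal.smul_def]

end FiberIntensityJensen

lemma convexOn_of_eConvexOn {Y : Type*} [MeasurableSpace Y] {S : Set (Measure Y)}
    (hS : Convex ℝ≥0 S) {F : Measure Y → EReal} (hF : EConvexOn S F) {f : Measure Y → ℝ}
    (hFf : ∀ q ∈ S, F q = f q) : ConvexOn ℝ≥0 S f := by
  refine ⟨hS, fun p hp q hq s t hs ht hst => ?_⟩
  have hts : 1 - s = t := hst ▸ add_tsub_cancel_left s t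
  have hconv := hF p hp q hq s (hst ▸ le_self_add)
  rw [hts, ← ENNReal.smul_def, ← ENNReal.smul_def, hFf _ (hS hp hq hs ht hst), hFf p hp,
    hFf q hq] at hconv
  exact_mod_cast hconv

section WassersteinSpace

variable {Y : Type*} [MeasurableSpace Y] [PseudoMetricSpace Y] {r : ℝ} {y₀ : Y}

lemma convex_Pr : Convex ℝ≥0 (Pr r y₀) := by
  intro p hp q hq s t _ _ hst
  have := hp.1
  have := hq.1
  refine ⟨⟨?_⟩, ?_⟩
  · simp only [Measure.add_apply, Measure.smul_apply, measure_univ, ENNReal.smul_def, smul_eq_mul,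
      mul_one]
    exact_mod_cast hst
  · change distMoment r y₀ _ < ⊤
    simp only [ENNReal.smul_def, distMoment_add, distMoment_smul]
    exact ENNReal.add_lt_top.2 ⟨ENNReal.mul_lt_top ENNReal.coe_lt_top hp.2,
      ENNReal.mul_lt_top ENNReal.coe_lt_top hq.2⟩

lemma distMoment_ne_top {q : Measure Y} (hq : q ∈ Pr r y₀) : distMoment r y₀ q ≠ ⊤ :=
  hq.2.ne

lemma toReal_distMoment_combination {p q : Measure Y} (hp : p ∈ Pr r y₀) (hq : q ∈ Pr r y₀)
    (s t : ℝ≥0) :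
    (distMoment r y₀ (s • p + t • q)).toReal =
      s * (distMoment r y₀ p).toReal + t * (distMoment r y₀ q).toReal := by
  simp only [ENNReal.smul_def, distMoment_add, distMoment_smul]
  rw [ENNReal.toReal_add (ENNReal.mul_ne_top ENNReal.coe_ne_top (distMoment_ne_top hp))
    (ENNReal.mul_ne_top ENNReal.coe_ne_top (distMoment_ne_top hq))]
  simp only [ENNReal.toReal_mul, ENNReal.coe_toReal]

lemma concaveOn_distMoment_sub {f : Measure Y → ℝ} (hf : ConvexOn ℝ≥0 (Pr r y₀) f) (a b : ℝ) :
    ConcaveOn ℝ≥0 (Pr r y₀) fun q => a + b * (distMoment r y₀ q).toReal - f q := by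
  refine ConcaveOn.sub ⟨convex_Pr, fun p hp q hq s t _ _ hst => le_of_eq ?_⟩ hf
  have hst' : (s : ℝ) + t = 1 := by exact_mod_cast hst
  simp only [toReal_distMoment_combination hp hq, NNReal.smul_def, smul_eq_mul]
  linear_combination a * hst'

lemma toReal_Wr_rpow_le (hr : 0 < r) {p q : Measure Y} (hp : p ∈ Pr r y₀) (hq : q ∈ Pr r y₀) :
    (Wr r p q ^ r).toReal ≤
      2 ^ r * ((distMoment r y₀ p).toReal + (distMoment r y₀ q).toReal) := by
  have := hp.1
  have := hq.1
  have hp' := distMoment_ne_top hp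
  have hq' := distMoment_ne_top hq
  have hbound := Wr_rpow_le_distMoment hr y₀ (p := p) (q := q)
  have h2 : (2 : ℝ≥0∞) ^ r ≠ ⊤ := ENNReal.rpow_ne_top_of_nonneg hr.le ENNReal.ofNat_ne_top
  calc (Wr r p q ^ r).toReal
      ≤ (2 ^ r * (distMoment r y₀ p + distMoment r y₀ q)).toReal :=
        ENNReal.toReal_mono (ENNReal.mul_ne_top h2 (ENNReal.add_ne_top.2 ⟨hp', hq'⟩)) hbound
    _ = 2 ^ r * ((distMoment r y₀ p).toReal + (distMoment r y₀ q).toReal) := by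
        rw [ENNReal.toReal_mul, ENNReal.toReal_add hp' hq', ← ENNReal.toReal_rpow,
          ENNReal.toReal_ofNat]

lemma mul_toReal_Wr_rpow_le (hr : 0 < r) (hp₀ : p₀ ∈ Pr r y₀) {q : Measure Y}
    (hq : q ∈ Pr r y₀) (K : ℝ) :
    K * (Wr r q p₀ ^ r).toReal ≤ |K| * 2 ^ r * (distMoment r y₀ p₀).toReal +
      |K| * 2 ^ r * (distMoment r y₀ q).toReal :=
  calc K * (Wr r q p₀ ^ r).toReal
      ≤ |K| * (2 ^ r * ((distMoment r y₀ q).toReal + (distMoment r y₀ p₀).toReal)) := by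
        gcongr
        exacts [le_abs_self K, toReal_Wr_rpow_le hr hq hp₀]
    _ = _ := by ring

end WassersteinSpace

section Fatou

variable {Y : Type*} [MeasurableSpace Y] [PseudoMetricSpace Y] [OpensMeasurableSpace Y]
  [TopologicalSpace.SeparableSpace Y] {r : ℝ} {y₀ : Y} {Q : Measure (Measure Y)}

theorem exists_measurable_ge_lintegral_le_of_concaveOn (hr : 0 < r) (hQ : Q ∈ PrP r y₀)
    {φ : Measure Y → ℝ} (hφ : ConcaveOn ℝ≥0 (Pr r y₀) φ) (hφ0 : ∀ q ∈ Pr r y₀, 0 ≤ φ q)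
    (hlsc : ∀ q ∈ Pr r y₀, ∀ qs : ℕ → Measure Y, (∀ n, qs n ∈ Pr r y₀) → WrTendsto r qs q →
      Tendsto (fun n => distMoment r y₀ (qs n)) atTop (𝓝 (distMoment r y₀ q)) →
        ENNReal.ofReal (φ q) ≤ liminf (fun n => ENNReal.ofReal (φ (qs n))) atTop) :
    ∃ H : Measure Y → ℝ≥0∞, Measurable H ∧ (∀ᵐ q ∂Q, ENNReal.ofReal (φ q) ≤ H q) ∧
      ∫⁻ q, H q ∂Q ≤ ENNReal.ofReal (φ (intensity Q)) := by
  have := hQ.1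
  obtain ⟨c, hc, hcell⟩ := exists_tendsto_fiberIntensity hr hQ
  have hmeas : ∀ n, Measurable fun q => ENNReal.ofReal (φ (fiberIntensity Q (c n) (c n q))) :=
    fun n => (measurable_of_finite
      fun a => ENNReal.ofReal (φ (fiberIntensity Q (c n) a))).comp (hc n)
  refine ⟨_, Measurable.liminf hmeas, ?_, ?_⟩
  · filter_upwards [hcell, hQ.2.1] with q ⟨hmem, hW, hmom⟩ hq
    exact hlsc q hq _ hmem hW hmom
  · calc _ ≤ _ := lintegral_liminf_le hmeas
      _ ≤ liminf (fun _ : ℕ => ENNReal.ofReal (φ (intensity Q))) atTop :=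
        liminf_le_liminf <| Eventually.of_forall fun n =>
          lintegral_ofReal_fiberIntensity_le hφ hφ0 (hc n) fun _ => fiberIntensity_mem_Pr hr hQ
      _ = _ := liminf_const _

lemma ofReal_sub_le_liminf {u v : ℕ → ℝ} {a b : ℝ} (hu : Tendsto u atTop (𝓝 a))
    (hv : limsup (fun n => (v n : EReal)) atTop ≤ b) :
    ENNReal.ofReal (a - b) ≤ liminf (fun n => ENNReal.ofReal (u n - v n)) atTop := by
  refine le_of_forall_lt_imp_le_of_dense fun x hx => le_liminf_of_le (by isBoundedDefault) ?_
  obtain ⟨ε, hε, hxε⟩ : ∃ ε > 0, x.toReal + 2 * ε = a - b :=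
    ⟨(a - b - x.toReal) / 2, by linarith [(ENNReal.lt_ofReal_iff_toReal_lt hx.ne_top).1 hx],
      by ring⟩
  have hv' : ∀ᶠ n in atTop, (v n : EReal) < (b + ε : ℝ) :=
    eventually_lt_of_limsup_lt (hv.trans_lt (EReal.coe_lt_coe_iff.2 (by linarith)))
  filter_upwards [hu.eventually (lt_mem_nhds (show a - ε < a by linarith)), hv'] with n hun hvn
  rw [EReal.coe_lt_coe_iff] at hvn
  exact ENNReal.le_ofReal_iff_toReal_le hx.ne_top (by linarith [x.toReal_nonneg]) |>.2
    (by linarith)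

theorem exists_integrable_le_of_convexOn (hr : 0 < r) (hQ : Q ∈ PrP r y₀) {f : Measure Y → ℝ}
    (hf : ConvexOn ℝ≥0 (Pr r y₀) f) (husc : UscWr1 r y₀ fun q => (f q : EReal)) {a b : ℝ}
    (hle : ∀ q ∈ Pr r y₀, f q ≤ a + b * (distMoment r y₀ q).toReal) :
    ∃ L : Measure Y → ℝ, Integrable L Q ∧ (∀ᵐ q ∂Q, L q ≤ f q) ∧
      f (intensity Q) ≤ ∫ q, L q ∂Q := by
  have := hQ.1
  let G : Measure Y → ℝ := fun q => a + b * (distMoment r y₀ q).toReal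
  have hGtendsto : ∀ q ∈ Pr r y₀, ∀ qs : ℕ → Measure Y,
      Tendsto (fun n => distMoment r y₀ (qs n)) atTop (𝓝 (distMoment r y₀ q)) →
        Tendsto (fun n => G (qs n)) atTop (𝓝 (G q)) := fun q hq qs h =>
    (((ENNReal.tendsto_toReal (distMoment_ne_top hq)).comp h).const_mul b).const_add a
  obtain ⟨H, hH, hHge, hHle⟩ := exists_measurable_ge_lintegral_le_of_concaveOn hr hQ
    (concaveOn_distMoment_sub hf a b) (fun q hq => sub_nonneg.2 (hle q hq))
    fun q hq qs hqs hW hmom => ofReal_sub_le_liminf (hGtendsto q hq qs hmom) (husc q qs hq hqs hW)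
  have hmom := lintegral_distMoment_lt_top hr hQ
  have hHtop : ∫⁻ q, H q ∂Q ≠ ⊤ := (hHle.trans_lt ENNReal.ofReal_lt_top).ne
  have hmomInt : Integrable (fun q => (distMoment r y₀ q).toReal) Q :=
    integrable_toReal_of_lintegral_ne_top measurable_distMoment.aemeasurable hmom.ne
  have hGint : Integrable G Q := (integrable_const a).add (hmomInt.const_mul b)
  have hHint : Integrable (fun q => (H q).toReal) Q :=
    integrable_toReal_of_lintegral_ne_top hH.aemeasurable hHtop
  have hGintegral : ∫ q, G q ∂Q = G (intensity Q) := by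
    simp only [G, integral_add (integrable_const a) (hmomInt.const_mul b), integral_const_mul,
      integral_toReal measurable_distMoment.aemeasurable (ae_lt_top measurable_distMoment hmom.ne),
      distMoment_intensity, integral_const, probReal_univ, one_smul]
  refine ⟨fun q => G q - (H q).toReal, hGint.sub hHint, ?_, ?_⟩
  · filter_upwards [hHge, ae_lt_top hH hHtop] with q hq hqtop
    linarith [(ENNReal.ofReal_le_iff_le_toReal hqtop.ne).1 hq]
  · rw [integral_sub hGint hHint, hGintegral,
      integral_toReal hH.aemeasurable (ae_lt_top hH hHtop)]
    have hnonneg : 0 ≤ G (intensity Q) - f (intensity Q) :=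
      sub_nonneg.2 (hle _ (intensity_mem_Pr hQ.2.1 hmom))
    linarith [ENNReal.toReal_le_of_le_ofReal hnonneg hHle]

end Fatou

section ExtendedIntegral

variable {X : Type*} [MeasurableSpace X] {μ : Measure X}

lemma epos_mono : Monotone epos := fun _ _ h => EReal.toENNReal_le_toENNReal h

lemma eInt_mono_ae {f g : X → EReal} (h : ∀ᵐ x ∂μ, f x ≤ g x) : eInt f μ ≤ eInt g μ :=
  EReal.sub_le_sub
    (EReal.coe_ennreal_le_coe_ennreal_iff.2 <| lintegral_mono_ae <| h.mono fun _ hx => epos_mono hx)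
    (EReal.coe_ennreal_le_coe_ennreal_iff.2 <| lintegral_mono_ae <| h.mono fun _ hx =>
      epos_mono (EReal.neg_le_neg_iff.2 hx))

lemma eInt_coe {f : X → ℝ} (hf : Integrable f μ) :
    eInt (fun x => (f x : EReal)) μ = ((∫ x, f x ∂μ : ℝ) : EReal) := by
  have hneg : ∫⁻ x, ENNReal.ofReal (-f x) ∂μ ≠ ⊤ := hf.neg.lintegral_lt_top.ne
  rw [integral_eq_lintegral_pos_part_sub_lintegral_neg_part hf, EReal.coe_sub,
    EReal.coe_ennreal_toReal hf.lintegral_lt_top.ne, EReal.coe_ennreal_toReal hneg]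
  rfl

end ExtendedIntegral

end WOT

theorem statement13_general {Y : Type*} [MeasurableSpace Y] [PseudoMetricSpace Y]
    [TopologicalSpace.SeparableSpace Y] [OpensMeasurableSpace Y]
    (r : ℝ) (hr : 0 < r) (y₀ : Y)
    (F : Measure Y → EReal) (hbot : ∀ q ∈ Pr r y₀, F q ≠ ⊥)
    (hconv : EConvexOn (Pr r y₀) F) (husc : UscWr1 r y₀ F)
    (p₀ : Measure Y) (hp₀ : p₀ ∈ Pr r y₀) (K : ℝ)
    (hub : ∀ q ∈ Pr r y₀, F q ≤ ((K * (Wr r q p₀ ^ r).toReal : ℝ) : EReal)) :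
    ∀ Q ∈ PrP r y₀, F (intensity Q) ≤ eInt F Q := by
  intro Q hQ
  have := hQ.1
  have hFf : ∀ q ∈ Pr r y₀, F q = (F q).toReal := fun q hq =>
    (EReal.coe_toReal ((hub q hq).trans_lt (EReal.coe_lt_top _)).ne (hbot q hq)).symm
  have hf_usc : UscWr1 r y₀ fun q => ((F q).toReal : EReal) := fun q qs hq hqs hW => by
    simpa only [← hFf q hq, ← hFf _ (hqs _)] using husc q qs hq hqs hW
  obtain ⟨L, hL, hLF, hJensen⟩ := exists_integrable_le_of_convexOn hr hQ
    (convexOn_of_eConvexOn convex_Pr hconv hFf) hf_usc fun q hq =>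
      (EReal.coe_le_coe_iff.1 (hFf q hq ▸ hub q hq)).trans (mul_toReal_Wr_rpow_le hr hp₀ hq K)
  calc F (intensity Q) = (F (intensity Q)).toReal :=
        hFf _ (intensity_mem_Pr hQ.2.1 (lintegral_distMoment_lt_top hr hQ))
    _ ≤ ((∫ q, L q ∂Q : ℝ) : EReal) := EReal.coe_le_coe_iff.2 hJensen
    _ = eInt (fun q => (L q : EReal)) Q := (eInt_coe hL).symm
    _ ≤ eInt F Q := eInt_mono_ae <| by
        filter_upwards [hLF, hQ.2.1] with q hLq hq
        exact hFf q hq ▸ EReal.coe_le_coe_iff.2 hLq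

/-- Jensen's inequality for convex upper semicontinuous functionals on
`𝒫_r(Y)` that are suitably bounded above (Lemma `lem:Jensen` (b)). -/
theorem statement13 {Y : Type*}
    [MeasurableSpace Y] [MetricSpace Y] [CompleteSpace Y] [SecondCountableTopology Y]
    [BorelSpace Y]
    (r : ℝ) (hr : 1 ≤ r) (y₀ : Y)
    (F : Measure Y → EReal) (hbot : ∀ q, F q ≠ ⊥)
    (hconv : EConvexOn (Pr r y₀) F) (husc : UscWr1 r y₀ F)
    (p₀ : Measure Y) (hp₀ : p₀ ∈ Pr r y₀) (K : ℝ)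
    (hub : ∀ q ∈ Pr r y₀, F q ≤ ((K * (Wr r q p₀ ^ r).toReal : ℝ) : EReal)) :
    ∀ Q ∈ PrP r y₀, F (intensity Q) ≤ eInt F Q :=
  statement13_general r (zero_lt_one.trans_le hr) y₀ F (fun q _ => hbot q) hconv husc p₀ hp₀ K hub
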